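/- Two K-programs P and Q are structurally congruent (i.e., their PGA-translations, obtained by replacing a trailing repeater ↰n by infinite repetition of the last n preceding instructions, are provably equal from the PGA axioms PGA1–PGA8) if and only if the equation P = Q is derivable in the proof system L_sc. -/

import Mathlib

/-- Primitive instructions over a set `A` of basic instructions:
basic instructions `a`, positive tests `+a`, negative tests `-a`,
jump instructions `#k` and the termination instruction `!`. -/
inductive PrimInstr (A : Type) : Type where
  | basic (a : A)
  | pos (a : A)
  | neg (a : A)
  | jump (k : Nat)
  | halt
deriving DecidableEq

/-- PGA-programs over `A`: primitive instructions, concatenation `X;Y`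
and repetition `X^ω`. -/
inductive PGA (A : Type) : Type where
  | prim (u : PrimInstr A)
  | seq (X Y : PGA A)
  | rep (X : PGA A)
deriving DecidableEq

/-- `X.pow n` is the power `X^n` for `n ≥ 1`: `X^1 = X` and `X^(n+1) = X ; X^n`.
(The value at `0` is irrelevant and set to `X`; all statements only use `n ≥ 1`.) -/
def PGA.pow {A : Type} (X : PGA A) : Nat → PGA A
  | 0 => X
  | 1 => X
  | n+2 => X.seq (X.pow (n+1))

/-- `catP [u_1, …, u_n] X` is the program `u_1 ; … ; u_n ; X`. -/
def catP {A : Type} : List (PrimInstr A) → PGA A → PGA A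
  | [], X => X
  | u :: l, X => (PGA.prim u).seq (catP l X)

/-- `fromL u [v_1, …, v_n]` is the repetition-free program `u ; v_1 ; … ; v_n`. -/
def fromL {A : Type} : PrimInstr A → List (PrimInstr A) → PGA A
  | u, [] => .prim u
  | u, v :: l => (PGA.prim u).seq (fromL v l)

/-- `progYZw [u_1,…,u_n] v [w_1,…,w_m]` is the first canonical form
`u_1 ; … ; u_n ; (v ; w_1 ; … ; w_m)^ω` (just `(v ; w_1 ; … ; w_m)^ω` if `n = 0`). -/
def progYZw {A : Type} (l₁ : List (PrimInstr A)) (v : PrimInstr A)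
    (l₂ : List (PrimInstr A)) : PGA A :=
  catP l₁ (PGA.rep (fromL v l₂))

/-- Equational-logic derivability from the axioms PGA1-PGA8 of program algebra
(structural congruence).  In PGA5-PGA8, `u_i`, `v_j` range over primitive
instructions and `k`, `n`, `m` over natural numbers. -/
inductive DerivSC {A : Type} : PGA A → PGA A → Prop
  | refl (X : PGA A) : DerivSC X X
  | symm {X Y : PGA A} : DerivSC X Y → DerivSC Y X
  | trans {X Y Z : PGA A} : DerivSC X Y → DerivSC Y Z → DerivSC X Z
  | seq_congr {X X' Y Y' : PGA A} : DerivSC X X' → DerivSC Y Y' → DerivSC (X.seq Y) (X'.seq Y')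
  | rep_congr {X Y : PGA A} : DerivSC X Y → DerivSC X.rep Y.rep
  | pga1 (X Y Z : PGA A) : DerivSC ((X.seq Y).seq Z) (X.seq (Y.seq Z))
  | pga2 (X : PGA A) (n : ℕ) (hn : 1 ≤ n) : DerivSC ((X.pow n).rep) X.rep
  | pga3 (X Y : PGA A) : DerivSC (X.rep.seq Y) X.rep
  | pga4 (X Y : PGA A) : DerivSC ((X.seq Y).rep) (X.seq ((Y.seq X).rep))
  | pga5 (l : List (PrimInstr A)) :
      DerivSC (catP (.jump (l.length + 1) :: l) (.prim (.jump 0)))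
              (catP (.jump 0 :: l) (.prim (.jump 0)))
  | pga6 (l : List (PrimInstr A)) (m : ℕ) :
      DerivSC (catP (.jump (l.length + 1) :: l) (.prim (.jump m)))
              (catP (.jump (l.length + m + 1) :: l) (.prim (.jump m)))
  | pga7 (k : ℕ) (l : List (PrimInstr A)) :
      DerivSC (PGA.rep (fromL (.jump (k + l.length + 1)) l))
              (PGA.rep (fromL (.jump k) l))
  | pga8 (l₁ : List (PrimInstr A)) (v : PrimInstr A) (l₂ : List (PrimInstr A)) (k : ℕ) :
      DerivSC ((PGA.prim (.jump (l₁.length + l₂.length + k + 2))).seq (progYZw l₁ v l₂))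
              ((PGA.prim (.jump (l₁.length + k + 1))).seq (progYZw l₁ v l₂))

/-- Instructions of the semigroup `L`: primitive instructions and
repeat instructions (repeaters) `↰n`.  (Genuine repeaters have `n ≥ 1`;
this is imposed as a hypothesis wherever relevant.) -/
inductive Instr (A : Type) : Type where
  | prim (u : PrimInstr A)
  | rep (n : Nat)
deriving DecidableEq

/-- Is this instruction a repeater? -/
def Instr.isRep {A : Type} : Instr A → Bool
  | .rep _ => true
  | .prim _ => false

/-- `↰n` is a genuine repeat instruction only for `n ≥ 1`. -/
def Instr.valid {A : Type} : Instr A → Prop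
  | .prim _ => True
  | .rep n => 1 ≤ n

/-- Terms of the semigroup `L`: finite nonempty sequences of instructions
under (associative) concatenation. -/
inductive LTerm (A : Type) : Type where
  | instr (i : Instr A)
  | seq (s t : LTerm A)
deriving DecidableEq

/-- The (nonempty) sequence of instructions an `L`-term consists of. -/
def LTerm.flat {A : Type} : LTerm A → List (Instr A)
  | .instr i => [i]
  | .seq s t => s.flat ++ t.flat

/-- `cat [i_1, …, i_n] t` is the `L`-term `i_1 ; … ; i_n ; t`. -/
def cat {A : Type} : List (Instr A) → LTerm A → LTerm A
  | [], t => t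
  | i :: l, t => (LTerm.instr i).seq (cat l t)

/-- `pcat [u_1, …, u_n] t` is the `L`-term `u_1 ; … ; u_n ; t`
for primitive instructions `u_i`. -/
def pcat {A : Type} (l : List (PrimInstr A)) (t : LTerm A) : LTerm A :=
  cat (l.map Instr.prim) t

/-- `listPow l m` is the `m`-fold concatenation `l^m` of the list `l`. -/
def listPow {α : Type} (l : List α) : ℕ → List α
  | 0 => []
  | n+1 => l ++ listPow l n

/-- The primitive instructions occurring in an instruction sequence. -/
def primsOf {A : Type} (l : List (Instr A)) : List (PrimInstr A) :=
  l.filterMap fun i => match i with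
    | .prim u => some u
    | .rep _ => none

/-- The counter of the final repeat instruction of an instruction sequence, if any. -/
def repOf {A : Type} (l : List (Instr A)) : Option ℕ :=
  match l.getLast? with
  | some (.rep n) => some n
  | _ => none

/-- Position lookup for the SPI denoted by `u_1 ; … ; u_k ; ↰n` (`us` the list of
the `u_i`): positions beyond the end wrap around through the last `n` instructions. -/
def kAt {A : Type} (us : List (PrimInstr A)) (n : ℕ) (p : ℕ) : Option (PrimInstr A) :=
  if p < us.length then us[p]?
  else us[us.length - n + (p - (us.length - n)) % n]?

/-- The SPI denoted by a `K`-program, given as position lookup on its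
instruction sequence: a repeater-free `K`-program `u_1 ; … ; u_n` denotes
`u_1 ; … ; u_n` and `u_1 ; … ; u_k ; ↰n` (`n ≤ k`) denotes `u_1 ; … ; u_{k-n}`
followed by the infinite repetition of `u_{k-n+1} ; … ; u_k`. -/
def kDen {A : Type} (l : List (Instr A)) : ℕ → Option (PrimInstr A) :=
  match repOf l with
  | none => fun p => (primsOf l)[p]?
  | some n => kAt (primsOf l) n

/-- `K`-programs: first canonical `L`-forms `u_1 ; … ; u_k` (all `u_i`
primitive), or `u_1 ; … ; u_k ; ↰n` with `1 ≤ n ≤ k`. -/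
def IsKProg {A : Type} (t : LTerm A) : Prop :=
  (∃ (u : PrimInstr A) (us : List (PrimInstr A)), t.flat = (u :: us).map Instr.prim) ∨
  (∃ (u : PrimInstr A) (us : List (PrimInstr A)) (n : ℕ),
     t.flat = (u :: us).map Instr.prim ++ [Instr.rep n] ∧ 1 ≤ n ∧ n ≤ (u :: us).length)

/-- The proof system `L_sc`: equational-logic derivability from the axioms (1)-(8) for structural congruence on `L`, where `u_i`, `v_j` range over primitive instructions, `k, l ∈ ℕ` and `m, n ≥ 1`. -/
inductive DerivLsc {{A : Type}} : LTerm A → LTerm A → Prop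
  | refl (t : LTerm A) : DerivLsc t t
  | symm {{s t : LTerm A}} : DerivLsc s t → DerivLsc t s
  | trans {{s t u : LTerm A}} : DerivLsc s t → DerivLsc t u → DerivLsc s u
  | seq_congr {{s s' t t' : LTerm A}} : DerivLsc s s' → DerivLsc t t' → DerivLsc (s.seq t) (s'.seq t')
  | assoc (s t u : LTerm A) : DerivLsc ((s.seq t).seq u) (s.seq (t.seq u))
  | ax2 (u : PrimInstr A) (us : List (PrimInstr A)) (m : ℕ) (hm : 1 ≤ m) :
      DerivLsc (pcat (u :: us) (.instr (.rep (u :: us).length)))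
          (pcat (listPow (u :: us) m) (.instr (.rep (m * (u :: us).length))))
  | ax3 (n : ℕ) (hn : 1 ≤ n) (t : LTerm A) :
      DerivLsc ((LTerm.instr (.rep n)).seq t) (.instr (.rep n))
  | ax4 (u : PrimInstr A) (us : List (PrimInstr A)) (v : PrimInstr A) (vs : List (PrimInstr A)) :
      DerivLsc
        (pcat ((u :: us) ++ (v :: vs)) (.instr (.rep ((u :: us).length + (v :: vs).length))))
        (pcat ((u :: us) ++ (v :: vs) ++ (u :: us)) (.instr (.rep ((u :: us).length + (v :: vs).length))))
  | ax5 (us : List (PrimInstr A)) :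
      DerivLsc (pcat (.jump (us.length + 1) :: us) (.instr (.prim (.jump 0))))
          (pcat (.jump 0 :: us) (.instr (.prim (.jump 0))))
  | ax6 (us : List (PrimInstr A)) (m : ℕ) (hm : 1 ≤ m) :
      DerivLsc (pcat (.jump (us.length + 1) :: us) (.instr (.prim (.jump m))))
          (pcat (.jump (us.length + m + 1) :: us) (.instr (.prim (.jump m))))
  | ax7 (us : List (PrimInstr A)) (l : ℕ) :
      DerivLsc (pcat (.jump (us.length + 1 + l) :: us) (.instr (.rep (us.length + 1))))
          (pcat (.jump l :: us) (.instr (.rep (us.length + 1))))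
  | ax8 (us : List (PrimInstr A)) (v : PrimInstr A) (vs : List (PrimInstr A)) (l : ℕ) :
      DerivLsc
        (pcat (.jump (us.length + 1 + (vs.length + 1) + l) :: (us ++ v :: vs))
          (.instr (.rep (vs.length + 1))))
        (pcat (.jump (us.length + 1 + l) :: (us ++ v :: vs))
          (.instr (.rep (vs.length + 1))))

/-- The repetition-free PGA-program `u_1 ; … ; u_n` (junk for the empty list,
which never occurs under the hypotheses used). -/
def pgaOfPrims {A : Type} : List (PrimInstr A) → PGA A
  | [] => .prim .halt
  | [u] => .prim u
  | u :: v :: l => (PGA.prim u).seq (pgaOfPrims (v :: l))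

/-- The PGA-translation of a `K`-program (given by its instruction sequence):
a trailing repeater `↰n` is replaced by infinite repetition of the last `n`
preceding instructions. -/
def pgaOfK {A : Type} (l : List (Instr A)) : PGA A :=
  match repOf l with
  | none => pgaOfPrims (primsOf l)
  | some n =>
      if (primsOf l).length ≤ n then PGA.rep (pgaOfPrims (primsOf l))
      else (pgaOfPrims ((primsOf l).take ((primsOf l).length - n))).seq
             (PGA.rep (pgaOfPrims ((primsOf l).drop ((primsOf l).length - n))))

/-!
Both directions extend the translation between `K`-programs and PGA-programs to all terms, so that
it can be followed along a derivation.

From PGA to `L`, the repetition `X^ω` becomes `X` followed by a repeater counting the instructions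
of `X`.  Provably equal programs have the same length in `ℕ∞`, so the repeaters introduced on the
two sides of an equation agree, except behind an infinite program, where axiom (3) absorbs them.

From `L` to PGA, a sequence is cut off behind its first repeater and a repeater reaching back beyond
the start repeats the whole sequence.  Axioms (1)-(8) are sound for this translation in every
context.  The delicate case is a jump rewritten by axiom (5) or (6) while a later repeater points
into the middle of the rewritten block: unfolding the repetition once places the whole block in
front of it, and what is repeated does not contain the jump.
-/

variable {A : Type}

section TermsModuloAssociativity

theorem flat_cat (l : List (Instr A)) (t : LTerm A) : (cat l t).flat = l ++ t.flat := by
  induction l with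
  | nil => rfl
  | cons i l ih => simp [cat, LTerm.flat, ih]

theorem flat_pcat (us : List (PrimInstr A)) (t : LTerm A) :
    (pcat us t).flat = us.map Instr.prim ++ t.flat :=
  flat_cat _ t

theorem cat_append (l l' : List (Instr A)) (t : LTerm A) :
    cat (l ++ l') t = cat l (cat l' t) := by
  induction l with
  | nil => rfl
  | cons i l ih => simp only [List.cons_append, cat, ih]

namespace DerivLsc

theorem cat_congr (l : List (Instr A)) {s t : LTerm A} (h : DerivLsc s t) :
    DerivLsc (cat l s) (cat l t) := by
  induction l with
  | nil => exact h
  | cons i l ih => exact .seq_congr (.refl _) ih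

theorem seq_cat_flat (s t : LTerm A) : DerivLsc (s.seq t) (cat s.flat t) := by
  induction s generalizing t with
  | instr i => exact .refl _
  | seq s₁ s₂ ih₁ ih₂ =>
    rw [LTerm.flat, cat_append]
    exact (DerivLsc.assoc s₁ s₂ t).trans ((ih₁ _).trans (cat_congr _ (ih₂ t)))

theorem exists_cat_instr (s : LTerm A) :
    ∃ l i, s.flat = l ++ [i] ∧ DerivLsc s (cat l (.instr i)) := by
  induction s with
  | instr i => exact ⟨[], i, rfl, .refl _⟩
  | seq s t _ iht =>
    obtain ⟨l, i, hflat, hderiv⟩ := iht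
    refine ⟨s.flat ++ l, i, by simp [LTerm.flat, hflat], ?_⟩
    rw [cat_append]
    exact (seq_cat_flat s t).trans (cat_congr _ hderiv)

theorem of_flat_eq {s t : LTerm A} (h : s.flat = t.flat) : DerivLsc s t := by
  obtain ⟨l, i, hs, hsl⟩ := exists_cat_instr s
  obtain ⟨l', i', ht, htl⟩ := exists_cat_instr t
  obtain ⟨rfl, rfl⟩ : l = l' ∧ i = i' := by simpa [hs, ht] using h
  exact hsl.trans htl.symm

theorem congr_flat {s s' t t' : LTerm A} (h : DerivLsc s t) (hs : s'.flat = s.flat)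
    (ht : t'.flat = t.flat) : DerivLsc s' t' :=
  (of_flat_eq hs).trans (h.trans (of_flat_eq ht.symm))

end DerivLsc

end TermsModuloAssociativity

section Prims

theorem primsOf_map_prim (us : List (PrimInstr A)) : primsOf (us.map Instr.prim) = us := by
  simp [primsOf]

theorem primsOf_map_prim_append_rep (us : List (PrimInstr A)) (n : ℕ) :
    primsOf (us.map Instr.prim ++ [.rep n]) = us := by
  simp [primsOf]

theorem repOf_map_prim (us : List (PrimInstr A)) : repOf (us.map Instr.prim) = none := by
  rw [repOf, List.getLast?_map]
  cases us.getLast? <;> rfl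

theorem repOf_append_rep (l : List (Instr A)) (n : ℕ) : repOf (l ++ [.rep n]) = some n := by
  simp [repOf]

theorem pgaOfK_map_prim (us : List (PrimInstr A)) :
    pgaOfK (us.map Instr.prim) = pgaOfPrims us := by
  simp only [pgaOfK, repOf_map_prim, primsOf_map_prim]

theorem pgaOfK_map_prim_append_rep (us : List (PrimInstr A)) (n : ℕ) :
    pgaOfK (us.map Instr.prim ++ [.rep n]) =
      if us.length ≤ n then (pgaOfPrims us).rep
      else (pgaOfPrims (us.take (us.length - n))).seq
        (pgaOfPrims (us.drop (us.length - n))).rep := by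
  simp only [pgaOfK, repOf_append_rep, primsOf_map_prim_append_rep]

theorem pgaOfPrims_cons (u : PrimInstr A) {us : List (PrimInstr A)} (h : us ≠ []) :
    pgaOfPrims (u :: us) = (PGA.prim u).seq (pgaOfPrims us) := by
  cases us with
  | nil => exact absurd rfl h
  | cons v vs => rfl

theorem fromL_eq_pgaOfPrims (u : PrimInstr A) (us : List (PrimInstr A)) :
    fromL u us = pgaOfPrims (u :: us) := by
  induction us generalizing u with
  | nil => rfl
  | cons v vs ih => rw [fromL, ih, pgaOfPrims_cons u (List.cons_ne_nil v vs)]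

theorem catP_append (us vs : List (PrimInstr A)) (X : PGA A) :
    catP (us ++ vs) X = catP us (catP vs X) := by
  induction us with
  | nil => rfl
  | cons u us ih => simp only [List.cons_append, catP, ih]

theorem pgaOfPrims_append (us : List (PrimInstr A)) {vs : List (PrimInstr A)} (h : vs ≠ []) :
    pgaOfPrims (us ++ vs) = catP us (pgaOfPrims vs) := by
  induction us with
  | nil => rfl
  | cons u us ih => rw [List.cons_append, pgaOfPrims_cons u (by simp [h]), ih, catP]

theorem length_listPow {α : Type} (l : List α) (n : ℕ) :
    (listPow l n).length = n * l.length := by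
  induction n with
  | zero => simp [listPow]
  | succ n ih => rw [listPow, List.length_append, ih]; ring

end Prims

section ToL

namespace PGA

/-- The number of instructions a PGA-program denotes, `⊤` for programs containing a repetition. -/
def length : PGA A → ℕ∞
  | .prim _ => 1
  | .seq X Y => X.length + Y.length
  | .rep _ => ⊤

/-- The primitive instructions occurring in a PGA-program, from left to right and counted once
inside a repetition. -/
def prims : PGA A → List (PrimInstr A)
  | .prim u => [u]
  | .seq X Y => X.prims ++ Y.prims
  | .rep X => X.prims

/-- The embedding of PGA-programs in `L` that sends `X^ω` to `X` followed by a repeater.  The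
counter of that repeater matters only if `X` is finite, since otherwise axiom (3) absorbs it. -/
def toL : PGA A → LTerm A
  | .prim u => .instr (.prim u)
  | .seq X Y => X.toL.seq Y.toL
  | .rep X => X.toL.seq (.instr (.rep X.prims.length))

theorem prims_ne_nil (X : PGA A) : X.prims ≠ [] := by
  induction X with
  | prim => simp [prims]
  | seq X Y ihX _ => simp [prims, ihX]
  | rep _ ihX => exact ihX

theorem coe_length_prims {X : PGA A} (h : X.length ≠ ⊤) : (X.prims.length : ℕ∞) = X.length := by
  induction X with
  | prim => rfl
  | seq X Y ihX ihY =>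
    obtain ⟨hX, hY⟩ : X.length ≠ ⊤ ∧ Y.length ≠ ⊤ := by simpa [length] using h
    simp [prims, length, ihX hX, ihY hY]
  | rep X _ => exact absurd rfl h

theorem flat_toL {X : PGA A} (h : X.length ≠ ⊤) : X.toL.flat = X.prims.map Instr.prim := by
  induction X with
  | prim => rfl
  | seq X Y ihX ihY =>
    obtain ⟨hX, hY⟩ : X.length ≠ ⊤ ∧ Y.length ≠ ⊤ := by simpa [length] using h
    simp [toL, LTerm.flat, prims, ihX hX, ihY hY]
  | rep X _ => exact absurd rfl h

theorem flat_toL_rep {X : PGA A} (h : X.length ≠ ⊤) :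
    X.rep.toL.flat = X.prims.map Instr.prim ++ [.rep X.prims.length] := by
  simp only [toL, LTerm.flat, flat_toL h]

theorem toL_seq_absorb {X : PGA A} (h : X.length = ⊤) (t : LTerm A) :
    DerivLsc (X.toL.seq t) X.toL := by
  induction X generalizing t with
  | prim => simp [length] at h
  | seq X Y ihX ihY =>
    refine (DerivLsc.assoc _ _ _).trans ?_
    rcases WithTop.add_eq_top.mp h with hX | hY
    · exact (ihX hX _).trans (ihX hX _).symm
    · exact .seq_congr (.refl _) (ihY hY t)
  | rep X _ =>
    have hpos := List.length_pos_iff.mpr X.prims_ne_nil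
    exact (DerivLsc.assoc _ _ _).trans (.seq_congr (.refl _) (.ax3 _ hpos t))

theorem length_catP (us : List (PrimInstr A)) (X : PGA A) :
    (catP us X).length = us.length + X.length := by
  induction us with
  | nil => simp [catP]
  | cons u us ih => simp only [catP, length, ih, List.length_cons]; push_cast; ring

theorem flat_toL_catP (us : List (PrimInstr A)) (X : PGA A) :
    (catP us X).toL.flat = us.map Instr.prim ++ X.toL.flat := by
  induction us with
  | nil => rfl
  | cons u us ih => simp [catP, toL, LTerm.flat, ih]

theorem length_pgaOfPrims_ne_top (us : List (PrimInstr A)) : (pgaOfPrims us).length ≠ ⊤ := by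
  fun_induction pgaOfPrims us with
  | case1 => simp [length]
  | case2 => simp [length]
  | case3 _ _ _ ih => simp [length, ih]

theorem prims_pgaOfPrims {us : List (PrimInstr A)} (h : us ≠ []) : (pgaOfPrims us).prims = us := by
  fun_induction pgaOfPrims us with
  | case1 => exact absurd rfl h
  | case2 => rfl
  | case3 u v us ih => simp [prims, ih (List.cons_ne_nil v us)]

theorem flat_toL_pgaOfPrims {us : List (PrimInstr A)} (h : us ≠ []) :
    (pgaOfPrims us).toL.flat = us.map Instr.prim := by
  rw [flat_toL (length_pgaOfPrims_ne_top us), prims_pgaOfPrims h]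

theorem flat_toL_rep_pgaOfPrims {us : List (PrimInstr A)} (h : us ≠ []) :
    (pgaOfPrims us).rep.toL.flat = us.map Instr.prim ++ [.rep us.length] := by
  rw [flat_toL_rep (length_pgaOfPrims_ne_top us), prims_pgaOfPrims h]

theorem length_pow_eq_top_iff (X : PGA A) (n : ℕ) : (X.pow n).length = ⊤ ↔ X.length = ⊤ := by
  fun_induction PGA.pow X n with
  | case1 => rfl
  | case2 => rfl
  | case3 n ih => simp [length, ih]

theorem prims_pow (X : PGA A) (n : ℕ) : (X.pow (n + 1)).prims = listPow X.prims (n + 1) := by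
  induction n with
  | zero => simp [pow, listPow]
  | succ n ih => rw [pow, prims, ih]; rfl

end PGA

open PGA

theorem DerivSC.length_eq {X Y : PGA A} (h : DerivSC X Y) : X.length = Y.length := by
  induction h with
  | refl => rfl
  | symm _ ih => exact ih.symm
  | trans _ _ ih₁ ih₂ => exact ih₁.trans ih₂
  | seq_congr _ _ ih₁ ih₂ => simp only [length, ih₁, ih₂]
  | pga1 X Y Z => exact add_assoc _ _ _
  | pga5 | pga6 => simp [length_catP]
  | pga8 => simp [length, progYZw, length_catP]
  | rep_congr | pga2 | pga3 | pga4 | pga7 => simp [length]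

namespace DerivLsc

theorem toL_rep_absorb {X : PGA A} (h : X.length = ⊤) : DerivLsc X.rep.toL X.toL :=
  toL_seq_absorb h _

theorem toL_rep_congr {X Y : PGA A} (hlen : X.length = Y.length) (h : DerivLsc X.toL Y.toL) :
    DerivLsc X.rep.toL Y.rep.toL := by
  by_cases hX : X.length = ⊤
  · exact (toL_rep_absorb hX).trans (h.trans (toL_rep_absorb (hlen ▸ hX)).symm)
  · have hprims : X.prims.length = Y.prims.length := by
      exact_mod_cast (coe_length_prims hX).trans (hlen.trans (coe_length_prims (hlen ▸ hX)).symm)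
    simp only [toL, hprims]
    exact .seq_congr h (.refl _)

theorem toL_pow_absorb {X : PGA A} (h : X.length = ⊤) (n : ℕ) : DerivLsc (X.pow n).toL X.toL := by
  fun_cases PGA.pow X n with
  | case1 => exact .refl _
  | case2 => exact .refl _
  | case3 n => exact toL_seq_absorb h _

theorem toL_rep_pow (X : PGA A) {n : ℕ} (hn : 1 ≤ n) :
    DerivLsc (X.pow n).rep.toL X.rep.toL := by
  by_cases hX : X.length = ⊤
  · have hpow := (length_pow_eq_top_iff X n).mpr hX
    exact (toL_rep_absorb hpow).trans ((toL_pow_absorb hX n).trans (toL_rep_absorb hX).symm)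
  · have hpow := mt (length_pow_eq_top_iff X n).mp hX
    obtain ⟨n, rfl⟩ := Nat.exists_eq_add_of_le' hn
    obtain ⟨u, us, hu⟩ := List.exists_cons_of_ne_nil X.prims_ne_nil
    refine congr_flat (DerivLsc.ax2 u us (n + 1) hn).symm ?_ ?_
    · rw [flat_toL_rep hpow, flat_pcat, prims_pow, length_listPow, hu, LTerm.flat]
    · rw [flat_toL_rep hX, flat_pcat, hu, LTerm.flat]

theorem toL_rep_seq (X Y : PGA A) :
    DerivLsc (X.seq Y).rep.toL (X.seq (Y.seq X).rep).toL := by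
  by_cases hX : X.length = ⊤
  · have hXY : (X.seq Y).length = ⊤ := by simp [length, hX]
    exact (toL_rep_absorb hXY).trans ((toL_seq_absorb hX _).trans (toL_seq_absorb hX _).symm)
  by_cases hY : Y.length = ⊤
  · have hXY : (X.seq Y).length = ⊤ := by simp [length, hY]
    have hYX : (Y.seq X).length = ⊤ := by simp [length, hY]
    have hrep := (toL_rep_absorb hYX).trans (toL_seq_absorb hY _)
    exact (toL_rep_absorb hXY).trans (.seq_congr (.refl _) hrep.symm)
  · have hXY : (X.seq Y).length ≠ ⊤ := by simp [length, hX, hY]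
    have hYX : (Y.seq X).length ≠ ⊤ := by simp [length, hX, hY]
    obtain ⟨u, us, hu⟩ := List.exists_cons_of_ne_nil X.prims_ne_nil
    obtain ⟨v, vs, hv⟩ := List.exists_cons_of_ne_nil Y.prims_ne_nil
    refine congr_flat (DerivLsc.ax4 u us v vs) ?_ ?_
    · simp [flat_toL_rep hXY, flat_pcat, LTerm.flat, prims, hu, hv, add_comm, add_left_comm]
    · rw [toL, LTerm.flat, flat_toL_rep hYX, flat_toL hX, flat_pcat]
      simp [LTerm.flat, prims, hu, hv, add_comm, add_left_comm]

end DerivLsc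

theorem DerivSC.derivLsc_toL {X Y : PGA A} (h : DerivSC X Y) : DerivLsc X.toL Y.toL := by
  induction h with
  | refl X => exact .refl _
  | symm _ ih => exact ih.symm
  | trans _ _ ih₁ ih₂ => exact ih₁.trans ih₂
  | seq_congr _ _ ih₁ ih₂ => exact .seq_congr ih₁ ih₂
  | rep_congr hXY ih => exact DerivLsc.toL_rep_congr hXY.length_eq ih
  | pga1 X Y Z => exact .assoc _ _ _
  | pga2 X n hn => exact DerivLsc.toL_rep_pow X hn
  | pga3 X Y => exact toL_seq_absorb (X := X.rep) rfl _
  | pga4 X Y => exact DerivLsc.toL_rep_seq X Y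
  | pga5 us =>
    refine DerivLsc.congr_flat (.ax5 us) ?_ ?_ <;> rw [flat_toL_catP, flat_pcat, toL]
  | pga6 us m =>
    rcases Nat.eq_zero_or_pos m with rfl | hm
    · exact .refl _
    · refine DerivLsc.congr_flat (.ax6 us m hm) ?_ ?_ <;>
        rw [flat_toL_catP, flat_pcat, toL]
  | pga7 k us =>
    refine DerivLsc.congr_flat (.ax7 us k) ?_ ?_ <;>
      rw [fromL_eq_pgaOfPrims, flat_toL_rep_pgaOfPrims (List.cons_ne_nil _ _), flat_pcat,
        LTerm.flat, List.length_cons]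
    rw [show k + us.length + 1 = us.length + 1 + k by omega]
  | pga8 us v vs k =>
    rw [show us.length + vs.length + k + 2 = us.length + 1 + (vs.length + 1) + k by omega,
      show us.length + k + 1 = us.length + 1 + k by omega]
    refine DerivLsc.congr_flat (.ax8 us v vs k) ?_ ?_ <;>
      rw [toL, LTerm.flat, progYZw, flat_toL_catP, fromL_eq_pgaOfPrims,
        flat_toL_rep_pgaOfPrims (List.cons_ne_nil _ _), flat_pcat] <;>
      simp only [LTerm.flat, toL, List.map_cons, List.map_append, List.cons_append,
        List.nil_append, List.append_assoc, List.length_cons]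

theorem IsKProg.flat_toL_pgaOfK {P : LTerm A} (h : IsKProg P) :
    (pgaOfK P.flat).toL.flat = P.flat := by
  rcases h with ⟨u, us, hP⟩ | ⟨u, us, n, hP, hpos, hle⟩
  · rw [hP, pgaOfK_map_prim, flat_toL_pgaOfPrims (List.cons_ne_nil u us)]
  · have hne : u :: us ≠ [] := List.cons_ne_nil u us
    generalize u :: us = vs at hP hle hne
    rw [hP, pgaOfK_map_prim_append_rep]
    split_ifs with hlen
    · rw [flat_toL_rep_pgaOfPrims hne, hle.antisymm hlen]
    · have htake : vs.take (vs.length - n) ≠ [] := by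
        rw [← List.length_pos_iff, List.length_take]; omega
      have hdrop : vs.drop (vs.length - n) ≠ [] := by
        rw [← List.length_pos_iff, List.length_drop]; omega
      rw [toL, LTerm.flat, flat_toL_pgaOfPrims htake, flat_toL_rep_pgaOfPrims hdrop,
        ← List.append_assoc, ← List.map_append, List.take_append_drop, List.length_drop,
        Nat.sub_sub_self hle]

end ToL

section ToPGA

namespace DerivSC

theorem catP_congr (us : List (PrimInstr A)) {X Y : PGA A} (h : DerivSC X Y) :
    DerivSC (catP us X) (catP us Y) := by
  induction us with
  | nil => exact h
  | cons u us ih => exact .seq_congr (.refl _) ih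

theorem catP_seq {us : List (PrimInstr A)} (h : us ≠ []) (X : PGA A) :
    DerivSC (catP us X) ((pgaOfPrims us).seq X) := by
  fun_induction pgaOfPrims us with
  | case1 => exact absurd rfl h
  | case2 => exact .refl _
  | case3 u v us ih =>
    exact (DerivSC.seq_congr (.refl _) (ih (List.cons_ne_nil v us))).trans (pga1 _ _ _).symm

theorem rep_unfold (X : PGA A) : DerivSC X.rep (X.seq X.rep) := by
  have hsq : DerivSC (X.seq X).rep X.rep := pga2 X 2 one_le_two
  exact hsq.symm.trans ((pga4 X X).trans (.seq_congr (.refl _) hsq))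

theorem catP_rep_self (us : List (PrimInstr A)) :
    DerivSC (catP us (pgaOfPrims us).rep) (pgaOfPrims us).rep := by
  by_cases h : us = []
  · subst h
    exact .refl _
  · exact (catP_seq h _).trans (rep_unfold _).symm

theorem pgaOfPrims_listPow {us : List (PrimInstr A)} (h : us ≠ []) (n : ℕ) :
    DerivSC (pgaOfPrims (listPow us (n + 1))) ((pgaOfPrims us).pow (n + 1)) := by
  induction n with
  | zero => simp only [listPow, List.append_nil, PGA.pow]; exact .refl _
  | succ n ih =>
    rw [listPow, pgaOfPrims_append us (by simp [listPow, h])]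
    exact (catP_seq h _).trans (.seq_congr (.refl _) ih)

theorem pgaOfK_append_rep (us : List (PrimInstr A)) (n : ℕ) :
    DerivSC (pgaOfK (us.map Instr.prim ++ [.rep n]))
      (catP us (pgaOfPrims (us.drop (us.length - n))).rep) := by
  rw [pgaOfK_map_prim_append_rep]
  split_ifs with hlen
  · rw [Nat.sub_eq_zero_of_le hlen, List.drop_zero]
    exact (catP_rep_self us).symm
  · have htake : us.take (us.length - n) ≠ [] := by
      rw [← List.length_pos_iff, List.length_take]; omega
    conv => rhs; arg 1; rw [← List.take_append_drop (us.length - n) us]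
    rw [catP_append]
    exact (catP_seq htake _).symm.trans (catP_congr _ (catP_rep_self _).symm)

section ReplaceBlock

variable {us vs : List (PrimInstr A)} (hus : us ≠ []) (hvs : vs ≠ [])
  (h : DerivSC (pgaOfPrims us) (pgaOfPrims vs))
include hus hvs h

theorem catP_append_congr (as bs : List (PrimInstr A)) (X : PGA A) :
    DerivSC (catP (as ++ us ++ bs) X) (catP (as ++ vs ++ bs) X) := by
  simp only [catP_append]
  exact catP_congr as ((catP_seq hus _).trans
    ((seq_congr h (.refl _)).trans (catP_seq hvs _).symm))

theorem pgaOfPrims_append_congr (as bs : List (PrimInstr A)) :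
    DerivSC (pgaOfPrims (as ++ us ++ bs)) (pgaOfPrims (as ++ vs ++ bs)) := by
  by_cases hbs : bs = []
  · simp only [hbs, List.append_nil, pgaOfPrims_append as hus, pgaOfPrims_append as hvs]
    exact catP_congr as h
  · rw [pgaOfPrims_append _ hbs, pgaOfPrims_append _ hbs]
    simpa using catP_append_congr hus hvs h as [] (pgaOfPrims bs)

end ReplaceBlock

theorem pgaOfK_replace_head {x y : PrimInstr A} {us : List (PrimInstr A)}
    (h : DerivSC (pgaOfPrims (x :: us)) (pgaOfPrims (y :: us))) (as bs : List (PrimInstr A))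
    (n : ℕ) :
    DerivSC (pgaOfK ((as ++ x :: us ++ bs).map Instr.prim ++ [.rep n]))
      (pgaOfK ((as ++ y :: us ++ bs).map Instr.prim ++ [.rep n])) := by
  have hx : x :: us ≠ [] := List.cons_ne_nil x us
  have hy : y :: us ≠ [] := List.cons_ne_nil y us
  have hlength : (as ++ y :: us ++ bs).length = (as ++ x :: us ++ bs).length := by simp
  have hrepeated (c : ℕ) : DerivSC (pgaOfPrims ((as ++ x :: us ++ bs).drop c))
      (pgaOfPrims ((as ++ y :: us ++ bs).drop c)) := by
    rcases le_or_gt c as.length with hc | hc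
    · simp only [List.append_assoc, List.drop_append_of_le_length hc]
      simpa using pgaOfPrims_append_congr hx hy h (as.drop c) bs
    · obtain ⟨d, rfl⟩ := Nat.exists_eq_add_of_lt hc
      simp [add_assoc, List.drop_append, refl]
  refine (pgaOfK_append_rep _ n).trans (.trans ?_ (pgaOfK_append_rep _ n).symm)
  rw [hlength]
  exact (catP_append_congr hx hy h as bs _).trans (.catP_congr _ (.rep_congr (hrepeated _)))

end DerivSC

/-- The initial segment of an instruction sequence that ends with its first repeater, or the whole
sequence if there is none. -/
def upToRep : List (Instr A) → List (Instr A)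
  | [] => []
  | .prim u :: l => .prim u :: upToRep l
  | .rep n :: _ => [.rep n]

/-- The PGA-translation extended from `K`-programs to all instruction sequences.  Ill-formed
repeaters are harmless: `↰0` turns into repetition of `!` and a repeater `↰n` preceded by fewer
than `n` instructions into repetition of all of them. -/
def pgaOfL (l : List (Instr A)) : PGA A :=
  pgaOfK (upToRep l)

/-- Two terms are contextually equal if replacing one by the other inside any instruction sequence
preserves the PGA-translation up to structural congruence. -/
def ContextEq (s t : LTerm A) : Prop :=
  ∀ p q : List (Instr A), DerivSC (pgaOfL (p ++ s.flat ++ q)) (pgaOfL (p ++ t.flat ++ q))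

theorem upToRep_map_prim_append (us : List (PrimInstr A)) (l : List (Instr A)) :
    upToRep (us.map Instr.prim ++ l) = us.map Instr.prim ++ upToRep l := by
  induction us with
  | nil => rfl
  | cons u us ih => simp only [List.map_cons, List.cons_append, upToRep, ih]

theorem pgaOfL_map_prim (us : List (PrimInstr A)) :
    pgaOfL (us.map Instr.prim) = pgaOfPrims us := by
  rw [pgaOfL, ← List.append_nil (us.map _), upToRep_map_prim_append, upToRep, List.append_nil,
    pgaOfK_map_prim]

theorem pgaOfL_map_prim_append_rep (us : List (PrimInstr A)) (n : ℕ) (l : List (Instr A)) :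
    pgaOfL (us.map Instr.prim ++ .rep n :: l) = pgaOfK (us.map Instr.prim ++ [.rep n]) := by
  rw [pgaOfL, upToRep_map_prim_append, upToRep]

theorem IsKProg.pgaOfL_flat {P : LTerm A} (h : IsKProg P) : pgaOfL P.flat = pgaOfK P.flat := by
  rcases h with ⟨u, us, hP⟩ | ⟨u, us, n, hP, -, -⟩
  · rw [hP, pgaOfL_map_prim, pgaOfK_map_prim]
  · rw [hP, pgaOfL_map_prim_append_rep]

theorem eq_map_prim_or_exists_rep (l : List (Instr A)) :
    (∃ us : List (PrimInstr A), l = us.map Instr.prim) ∨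
      ∃ (us : List (PrimInstr A)) (n : ℕ) (l' : List (Instr A)),
        l = us.map Instr.prim ++ .rep n :: l' := by
  induction l with
  | nil => exact .inl ⟨[], rfl⟩
  | cons i l ih =>
    match i, ih with
    | .rep n, _ => exact .inr ⟨[], n, l, rfl⟩
    | .prim u, .inl ⟨us, hl⟩ => exact .inl ⟨u :: us, by simp [hl]⟩
    | .prim u, .inr ⟨us, n, l', hl⟩ => exact .inr ⟨u :: us, n, l', by simp [hl]⟩

namespace ContextEq

theorem of_prim_prefix {s t : LTerm A}
    (h : ∀ (us : List (PrimInstr A)) (q : List (Instr A)),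
      DerivSC (pgaOfL (us.map Instr.prim ++ s.flat ++ q))
        (pgaOfL (us.map Instr.prim ++ t.flat ++ q))) :
    ContextEq s t := by
  intro p q
  rcases eq_map_prim_or_exists_rep p with ⟨us, rfl⟩ | ⟨us, n, p', rfl⟩
  · exact h us q
  · simp only [List.append_assoc, List.cons_append, pgaOfL_map_prim_append_rep]
    exact .refl _

theorem seq_congr {s s' t t' : LTerm A} (hs : ContextEq s s') (ht : ContextEq t t') :
    ContextEq (s.seq t) (s'.seq t') := by
  intro p q
  have hleft := hs p (t.flat ++ q)
  have hright := ht (p ++ s'.flat) q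
  simp only [LTerm.flat, List.append_assoc] at hleft hright ⊢
  exact hleft.trans hright

theorem pcat_rep {us vs us' vs' : List (PrimInstr A)} {n n' : ℕ} (hn : n = vs.length)
    (hn' : n' = vs'.length)
    (h : DerivSC (catP us (pgaOfPrims vs).rep) (catP us' (pgaOfPrims vs').rep)) :
    ContextEq (pcat (us ++ vs) (.instr (.rep n))) (pcat (us' ++ vs') (.instr (.rep n'))) := by
  have translation (as bs cs : List (PrimInstr A)) (q : List (Instr A)) :
      DerivSC (pgaOfL (as.map Instr.prim ++ (pcat (bs ++ cs) (.instr (.rep cs.length))).flat ++ q))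
        (catP as (catP bs (pgaOfPrims cs).rep)) := by
    rw [flat_pcat, ← List.append_assoc, ← List.map_append, LTerm.flat, List.append_assoc,
      List.singleton_append, pgaOfL_map_prim_append_rep, ← List.append_assoc]
    refine (DerivSC.pgaOfK_append_rep _ _).trans ?_
    rw [catP_append, catP_append, List.length_append, Nat.add_sub_cancel, List.drop_left]
    exact .catP_congr as (.catP_congr bs (.catP_rep_self cs))
  subst hn hn'
  exact of_prim_prefix fun as q =>
    (translation as us vs q).trans ((DerivSC.catP_congr as h).trans (translation as us' vs' q).symm)

theorem pcat_replace_head {x y z : PrimInstr A} {us : List (PrimInstr A)}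
    (h : DerivSC (catP (x :: us) (.prim z)) (catP (y :: us) (.prim z))) :
    ContextEq (pcat (x :: us) (.instr (.prim z))) (pcat (y :: us) (.instr (.prim z))) := by
  have hprims : DerivSC (pgaOfPrims (x :: (us ++ [z]))) (pgaOfPrims (y :: (us ++ [z]))) := by
    simpa only [← List.cons_append, pgaOfPrims_append _ (List.cons_ne_nil z []), pgaOfPrims] using h
  have hflat (w : PrimInstr A) :
      (pcat (w :: us) (.instr (.prim z))).flat = (w :: (us ++ [z])).map Instr.prim := by
    simp [flat_pcat, LTerm.flat]
  refine of_prim_prefix fun as q => ?_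
  rw [hflat, hflat, ← List.map_append, ← List.map_append]
  rcases eq_map_prim_or_exists_rep q with ⟨bs, rfl⟩ | ⟨bs, n, q', rfl⟩
  · simp only [← List.map_append, pgaOfL_map_prim]
    exact .pgaOfPrims_append_congr (List.cons_ne_nil _ _) (List.cons_ne_nil _ _) hprims as bs
  · simp only [← List.append_assoc, ← List.map_append, pgaOfL_map_prim_append_rep]
    exact .pgaOfK_replace_head hprims as bs n

theorem ax2 (u : PrimInstr A) (us : List (PrimInstr A)) {m : ℕ} (hm : 1 ≤ m) :
    ContextEq (pcat (u :: us) (.instr (.rep (u :: us).length)))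
      (pcat (listPow (u :: us) m) (.instr (.rep (m * (u :: us).length)))) := by
  obtain ⟨m, rfl⟩ := Nat.exists_eq_add_of_le' hm
  have hpow := DerivSC.pgaOfPrims_listPow (List.cons_ne_nil u us) m
  exact pcat_rep (us := []) (us' := []) rfl (length_listPow _ _).symm
    ((DerivSC.pga2 _ _ hm).symm.trans (.rep_congr hpow.symm))

theorem ax4 {us vs : List (PrimInstr A)} (hus : us ≠ []) (hvs : vs ≠ []) :
    ContextEq (pcat (us ++ vs) (.instr (.rep (us.length + vs.length))))
      (pcat (us ++ vs ++ us) (.instr (.rep (us.length + vs.length)))) := by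
  have hrotate : DerivSC (pgaOfPrims (us ++ vs)).rep (catP us (pgaOfPrims (vs ++ us)).rep) := by
    rw [pgaOfPrims_append us hvs, pgaOfPrims_append vs hus]
    have hseq := DerivSC.rep_congr (DerivSC.catP_seq hus (pgaOfPrims vs))
    have hswap := DerivSC.rep_congr (DerivSC.catP_seq hvs (pgaOfPrims us)).symm
    exact hseq.trans ((DerivSC.pga4 _ _).trans
      ((DerivSC.seq_congr (.refl _) hswap).trans (DerivSC.catP_seq hus _).symm))
  rw [List.append_assoc]
  exact pcat_rep (us := []) (by simp) (by simp [add_comm]) hrotate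

theorem ax7 (us : List (PrimInstr A)) (k : ℕ) :
    ContextEq (pcat (.jump (us.length + 1 + k) :: us) (.instr (.rep (us.length + 1))))
      (pcat (.jump k :: us) (.instr (.rep (us.length + 1)))) := by
  have h := DerivSC.pga7 k us
  rw [fromL_eq_pgaOfPrims, fromL_eq_pgaOfPrims,
    show k + us.length + 1 = us.length + 1 + k by omega] at h
  exact pcat_rep (us := []) (us' := []) rfl rfl h

theorem ax8 (us : List (PrimInstr A)) (v : PrimInstr A) (vs : List (PrimInstr A)) (k : ℕ) :
    ContextEq
      (pcat (.jump (us.length + 1 + (vs.length + 1) + k) :: (us ++ v :: vs))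
        (.instr (.rep (vs.length + 1))))
      (pcat (.jump (us.length + 1 + k) :: (us ++ v :: vs)) (.instr (.rep (vs.length + 1)))) := by
  have h := DerivSC.pga8 us v vs k
  rw [progYZw, fromL_eq_pgaOfPrims,
    show us.length + vs.length + k + 2 = us.length + 1 + (vs.length + 1) + k by omega,
    show us.length + k + 1 = us.length + 1 + k by omega] at h
  exact pcat_rep (us := _ :: us) (us' := _ :: us) rfl rfl h

end ContextEq

theorem DerivLsc.contextEq {s t : LTerm A} (h : DerivLsc s t) : ContextEq s t := by
  induction h with
  | refl t => exact fun _ _ => .refl _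
  | symm _ ih => exact fun p q => (ih p q).symm
  | trans _ _ ih₁ ih₂ => exact fun p q => (ih₁ p q).trans (ih₂ p q)
  | seq_congr _ _ ih₁ ih₂ => exact ih₁.seq_congr ih₂
  | assoc s t u => intro p q; simp only [LTerm.flat, List.append_assoc]; exact .refl _
  | ax2 u us m hm => exact .ax2 u us hm
  | ax3 n _ t =>
    refine .of_prim_prefix fun us q => ?_
    simp only [LTerm.flat, List.append_assoc, List.cons_append, pgaOfL_map_prim_append_rep]
    exact .refl _
  | ax4 u us v vs => exact .ax4 (List.cons_ne_nil u us) (List.cons_ne_nil v vs)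
  | ax5 us => exact .pcat_replace_head (.pga5 us)
  | ax6 us m _ => exact .pcat_replace_head (.pga6 us m)
  | ax7 us k => exact .ax7 us k
  | ax8 us v vs k => exact .ax8 us v vs k

theorem DerivLsc.derivSC_pgaOfL {s t : LTerm A} (h : DerivLsc s t) :
    DerivSC (pgaOfL s.flat) (pgaOfL t.flat) := by
  simpa using h.contextEq [] []

end ToPGA

/-- Two `K`-programs are structurally congruent (their PGA-translations are
provably equal from PGA1-PGA8) if and only if their equality is derivable in
the proof system `L_sc`. -/
theorem K_structural_congruence_iff_Lsc (A : Type) (P Q : LTerm A)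
    (hP : IsKProg P) (hQ : IsKProg Q) :
    DerivSC (pgaOfK P.flat) (pgaOfK Q.flat) ↔ DerivLsc P Q := by
  constructor
  · intro h
    exact h.derivLsc_toL.congr_flat hP.flat_toL_pgaOfK.symm hQ.flat_toL_pgaOfK.symm
  · intro h
    rw [← hP.pgaOfL_flat, ← hQ.pgaOfL_flat]
    exact h.derivSC_pgaOfL
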